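/- Let p be a prime and let G and H be finite p-groups such that FG and FH are isomorphic as F-algebras for some field F of characteristic p. Then there exists a finite field F₀ of characteristic p such that F₀G and F₀H are isomorphic as F₀-algebras. -/

import Mathlib

/-!
An isomorphism of scalar extensions `R ⊗[k] A ≃ₐ[R] R ⊗[k] B` of finitely generated algebras over
a field `k`, together with its inverse, is determined by the images of finitely many generators.
These images involve only finitely many elements of `R`, so the isomorphism is already defined over
a finitely generated `k`-subalgebra `S` of `R`. By Zariski's lemma `S` maps to a finite extension
`K` of `k`, and extending scalars along `S → K` gives `K ⊗[k] A ≃ₐ[K] K ⊗[k] B`. For `k = 𝔽_p` the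
field `K` is finite.
-/

open scoped TensorProduct

section ScalarExtensionMap

variable (k S R A : Type*) [CommSemiring k] [CommSemiring S] [CommSemiring R] [Semiring A]
  [Algebra k S] [Algebra k R] [Algebra S R] [IsScalarTower k S R] [Algebra k A]

/-- The canonical map `S ⊗[k] A → R ⊗[k] A` between the scalar extensions of a `k`-algebra `A`
along a tower `k → S → R`. -/
noncomputable def scalarExtensionMap : S ⊗[k] A →ₐ[S] R ⊗[k] A :=
  Algebra.TensorProduct.map (Algebra.ofId S R) (AlgHom.id k A)

@[simp]
theorem scalarExtensionMap_tmul (s : S) (a : A) :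
    scalarExtensionMap k S R A (s ⊗ₜ a) = algebraMap S R s ⊗ₜ a :=
  rfl

theorem scalarExtensionMap_injective [Module.Flat k A]
    (hSR : Function.Injective (algebraMap S R)) :
    Function.Injective (scalarExtensionMap k S R A) :=
  Module.Flat.rTensor_preserves_injective_linearMap (M := A)
    (IsScalarTower.toAlgHom k S R).toLinearMap hSR

variable {k A}

theorem range_scalarExtensionMap {s : Set A} (hs : Algebra.adjoin k s = ⊤) :
    (scalarExtensionMap k S R A).range =
      Algebra.adjoin S ((fun a ↦ (1 : R) ⊗ₜ[k] a) '' s) := by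
  rw [← Algebra.map_top, ← Algebra.TensorProduct.adjoin_one_tmul_image_eq_top s hs,
    AlgHom.map_adjoin, Set.image_image]
  simp only [scalarExtensionMap_tmul, map_one]

variable {S R}

theorem map_range_scalarExtensionMap_le {B : Type*} [Semiring B] [Algebra k B]
    {s : Set A} (hs : Algebra.adjoin k s = ⊤) (f : R ⊗[k] A →ₐ[R] R ⊗[k] B)
    (hf : (fun a ↦ f (1 ⊗ₜ a)) '' s ⊆ (scalarExtensionMap k S R B).range) :
    (scalarExtensionMap k S R A).range.map (f.restrictScalars S) ≤
      (scalarExtensionMap k S R B).range := by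
  rw [range_scalarExtensionMap S R hs, AlgHom.map_adjoin, Algebra.adjoin_le_iff, Set.image_image]
  exact hf

end ScalarExtensionMap

theorem nonempty_algEquiv_of_map_range_eq {S A B C D : Type*} [CommSemiring S] [Semiring A]
    [Semiring B] [Semiring C] [Semiring D] [Algebra S A] [Algebra S B] [Algebra S C] [Algebra S D]
    {i : A →ₐ[S] C} {j : B →ₐ[S] D} (hi : Function.Injective i) (hj : Function.Injective j)
    (e : C ≃ₐ[S] D) (h : i.range.map (e : C →ₐ[S] D) = j.range) :
    Nonempty (A ≃ₐ[S] B) :=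
  ⟨(AlgEquiv.ofInjective i hi).trans <| (e.subalgebraMap i.range).trans <|
    (Subalgebra.equivOfEq _ _ h).trans (AlgEquiv.ofInjective j hj).symm⟩

section Descent

variable {k R A B : Type*} [CommSemiring k] [CommSemiring R] [Semiring A] [Semiring B]
  [Algebra k R] [Algebra k A] [Algebra k B]

theorem nonempty_tensorProduct_algEquiv_of_image_subset_range {S : Type*} [CommSemiring S]
    [Algebra k S] [Algebra S R] [IsScalarTower k S R] [Module.Flat k A] [Module.Flat k B]
    (hSR : Function.Injective (algebraMap S R)) (φ : R ⊗[k] A ≃ₐ[R] R ⊗[k] B)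
    {s : Set A} (hs : Algebra.adjoin k s = ⊤) {t : Set B} (ht : Algebra.adjoin k t = ⊤)
    (hφ : (fun a ↦ φ (1 ⊗ₜ a)) '' s ⊆ (scalarExtensionMap k S R B).range)
    (hφ_symm : (fun b ↦ φ.symm (1 ⊗ₜ b)) '' t ⊆ (scalarExtensionMap k S R A).range) :
    Nonempty (S ⊗[k] A ≃ₐ[S] S ⊗[k] B) := by
  refine nonempty_algEquiv_of_map_range_eq (scalarExtensionMap_injective k S R A hSR)
    (scalarExtensionMap_injective k S R B hSR) (φ.restrictScalars S) (le_antisymm ?_ ?_)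
  · exact map_range_scalarExtensionMap_le hs φ.toAlgHom hφ
  · intro y hy
    have hy' := map_range_scalarExtensionMap_le ht φ.symm.toAlgHom hφ_symm ⟨y, hy, rfl⟩
    exact ⟨φ.symm y, hy', φ.apply_symm_apply y⟩

theorem range_rTensor_subtype_subset_range_scalarExtensionMap {J : Submodule k R}
    {S : Subalgebra k R} (hJS : J ≤ S.toSubmodule) :
    (LinearMap.range (J.subtype.rTensor A) : Set (R ⊗[k] A)) ⊆
      (scalarExtensionMap k S R A).range := by
  have hfactor : J.subtype.rTensor A =
      S.val.toLinearMap.rTensor A ∘ₗ (Submodule.inclusion hJS).rTensor A := by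
    rw [← LinearMap.rTensor_comp]
    rfl
  rw [hfactor]
  exact LinearMap.range_comp_le_range _ _

theorem range_scalarExtensionMap_mono {S T : Subalgebra k R} (hST : S ≤ T) :
    ((scalarExtensionMap k S R A).range : Set (R ⊗[k] A)) ⊆ (scalarExtensionMap k T R A).range :=
  range_rTensor_subtype_subset_range_scalarExtensionMap (J := S.toSubmodule) hST

theorem exists_fg_subalgebra_subset_range_scalarExtensionMap {x : Set (R ⊗[k] A)}
    (hx : x.Finite) :
    ∃ S : Subalgebra k R, S.FG ∧ x ⊆ (scalarExtensionMap k S R A).range := by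
  obtain ⟨_, ⟨r, rfl⟩, hxr⟩ := Submodule.exists_fg_le_subset_range_rTensor_subtype x hx
  exact ⟨Algebra.adjoin k r, Subalgebra.fg_adjoin_finset r, hxr.trans <|
    range_rTensor_subtype_subset_range_scalarExtensionMap (Algebra.span_le_adjoin k _)⟩

theorem exists_fg_subalgebra_nonempty_tensorProduct_algEquiv [Module.Flat k A] [Module.Flat k B]
    [Algebra.FiniteType k A] [Algebra.FiniteType k B] (φ : R ⊗[k] A ≃ₐ[R] R ⊗[k] B) :
    ∃ S : Subalgebra k R, S.FG ∧ Nonempty (S ⊗[k] A ≃ₐ[S] S ⊗[k] B) := by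
  obtain ⟨s, hs⟩ := Algebra.FiniteType.out (R := k) (A := A)
  obtain ⟨t, ht⟩ := Algebra.FiniteType.out (R := k) (A := B)
  obtain ⟨S, hS, hφ⟩ := exists_fg_subalgebra_subset_range_scalarExtensionMap
    (s.finite_toSet.image fun a ↦ φ (1 ⊗ₜ a))
  obtain ⟨T, hT, hφ_symm⟩ := exists_fg_subalgebra_subset_range_scalarExtensionMap
    (t.finite_toSet.image fun b ↦ φ.symm (1 ⊗ₜ b))
  exact ⟨S ⊔ T, hS.sup hT, nonempty_tensorProduct_algEquiv_of_image_subset_range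
    Subtype.val_injective φ hs ht
    (hφ.trans (range_scalarExtensionMap_mono le_sup_left))
    (hφ_symm.trans (range_scalarExtensionMap_mono le_sup_right))⟩

end Descent

theorem exists_finiteDimensional_nonempty_algHom (k S : Type*) [Field k] [CommRing S]
    [Nontrivial S] [Algebra k S] [Algebra.FiniteType k S] :
    ∃ K : IntermediateField k (AlgebraicClosure k),
      FiniteDimensional k K ∧ Nonempty (S →ₐ[k] K) := by
  obtain ⟨m, hm⟩ := Ideal.exists_maximal S
  let := Ideal.Quotient.field m
  have : Module.Finite k (S ⧸ m) := finite_of_finite_type_of_isJacobsonRing k (S ⧸ m)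
  let ι : S ⧸ m →ₐ[k] AlgebraicClosure k := IsAlgClosed.lift
  exact ⟨ι.fieldRange, .equiv ι.equivFieldRange.toLinearEquiv,
    ⟨ι.equivFieldRange.toAlgHom.comp (Ideal.Quotient.mkₐ k m)⟩⟩

/-- Extending scalars from `k` to `S` and then from `S` to `K` is extending scalars from `k` to `K`.
Unlike in `Algebra.TensorProduct.cancelBaseChange`, the algebra `A` need not be commutative. -/
noncomputable def cancelScalarExtensionEquiv (k S K A : Type*) [CommSemiring k] [CommSemiring S]
    [CommSemiring K] [Semiring A] [Algebra k S] [Algebra k K] [Algebra S K] [IsScalarTower k S K]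
    [Algebra k A] : K ⊗[S] (S ⊗[k] A) ≃ₐ[K] K ⊗[k] A :=
  (Algebra.TensorProduct.assoc k S K K S A).symm.trans <|
    Algebra.TensorProduct.congr (Algebra.TensorProduct.rid S K K) .refl

theorem nonempty_tensorProduct_algEquiv_of_algHom {k S K A B : Type*} [CommSemiring k]
    [CommSemiring S] [CommSemiring K] [Semiring A] [Semiring B] [Algebra k S]
    [Algebra k K] [Algebra k A] [Algebra k B]
    (f : S →ₐ[k] K) (e : S ⊗[k] A ≃ₐ[S] S ⊗[k] B) :
    Nonempty (K ⊗[k] A ≃ₐ[K] K ⊗[k] B) := by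
  let : Algebra S K := f.toAlgebra
  have : IsScalarTower k S K := .of_algHom f
  exact ⟨(cancelScalarExtensionEquiv k S K A).symm.trans <|
    (Algebra.TensorProduct.congr .refl e).trans <| cancelScalarExtensionEquiv k S K B⟩

theorem exists_finiteDimensional_nonempty_tensorProduct_algEquiv {k R A B : Type*} [Field k]
    [CommRing R] [Nontrivial R] [Ring A] [Ring B] [Algebra k R] [Algebra k A] [Algebra k B]
    [Algebra.FiniteType k A] [Algebra.FiniteType k B] (φ : R ⊗[k] A ≃ₐ[R] R ⊗[k] B) :
    ∃ K : IntermediateField k (AlgebraicClosure k),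
      FiniteDimensional k K ∧ Nonempty (K ⊗[k] A ≃ₐ[K] K ⊗[k] B) := by
  obtain ⟨S, hS, ⟨e⟩⟩ := exists_fg_subalgebra_nonempty_tensorProduct_algEquiv φ
  have : Algebra.FiniteType k S := S.fg_iff_finiteType.mp hS
  obtain ⟨K, hK, ⟨f⟩⟩ := exists_finiteDimensional_nonempty_algHom k S
  exact ⟨K, hK, nonempty_tensorProduct_algEquiv_of_algHom f e⟩

/-- The scalar extension of the monoid algebra `k[M]` to a commutative `k`-algebra `R` is `R[M]`.
Unlike in `MonoidAlgebra.scalarTensorEquiv`, the monoid `M` need not be commutative. -/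
noncomputable def tensorMonoidAlgebraEquiv (k R M : Type*) [CommSemiring k] [CommSemiring R]
    [Algebra k R] [Monoid M] : R ⊗[k] MonoidAlgebra k M ≃ₐ[R] MonoidAlgebra R M :=
  AlgEquiv.ofAlgHom
    (Algebra.TensorProduct.lift (Algebra.ofId R _) (MonoidAlgebra.mapAlgHom M (Algebra.ofId k R))
      fun r _ ↦ by rw [Algebra.ofId_apply]; exact Algebra.commute_algebraMap_left r _)
    (MonoidAlgebra.lift R _ M
      ((Algebra.TensorProduct.includeRight : _ →ₐ[k] R ⊗[k] MonoidAlgebra k M).toMonoidHom.comp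
        (MonoidAlgebra.of k M)))
    (by ext; simp) (by ext; simp)

theorem modular_isomorphism_problem_reduces_to_finite_fields_general
    {k R G H : Type*} [Field k] [CommRing R] [Nontrivial R] [Algebra k R]
    [Monoid G] [Monoid H] [Monoid.FG G] [Monoid.FG H]
    (φ : MonoidAlgebra R G ≃ₐ[R] MonoidAlgebra R H) :
    ∃ K : IntermediateField k (AlgebraicClosure k),
      FiniteDimensional k K ∧ Nonempty (MonoidAlgebra K G ≃ₐ[K] MonoidAlgebra K H) := by
  obtain ⟨K, hK, ⟨ψ⟩⟩ := exists_finiteDimensional_nonempty_tensorProduct_algEquiv <|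
    (tensorMonoidAlgebraEquiv k R G).trans <| φ.trans (tensorMonoidAlgebraEquiv k R H).symm
  exact ⟨K, hK, ⟨(tensorMonoidAlgebraEquiv k K G).symm.trans <|
    ψ.trans (tensorMonoidAlgebraEquiv k K H)⟩⟩

/-- **Corollary (Modular Isomorphism Problem).** Let `G` and `H` be finite `p`-groups such
that `FG ≅ FH` as `F`-algebras for some field `F` of characteristic `p`. Then there is a
finite field `F₀` of characteristic `p` with `F₀G ≅ F₀H` as `F₀`-algebras. -/
theorem modular_isomorphism_problem_reduces_to_finite_fields
    (p : ℕ) (hp : p.Prime) (G H : Type*) [Group G] [Group H] [Finite G] [Finite H]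
    (hG : IsPGroup p G) (hH : IsPGroup p H)
    (F : Type*) [Field F] [CharP F p]
    (h : Nonempty (MonoidAlgebra F G ≃ₐ[F] MonoidAlgebra F H)) :
    ∃ (F₀ : Type) (_ : Field F₀) (_ : Finite F₀) (_ : CharP F₀ p),
      Nonempty (MonoidAlgebra F₀ G ≃ₐ[F₀] MonoidAlgebra F₀ H) := by
  obtain ⟨φ⟩ := h
  have : Fact p.Prime := ⟨hp⟩
  let : Algebra (ZMod p) F := ZMod.algebra F p
  obtain ⟨K, hK, hGH⟩ :=
    modular_isomorphism_problem_reduces_to_finite_fields_general (k := ZMod p) φ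
  exact ⟨K, inferInstance, Module.finite_of_finite (ZMod p),
    charP_of_injective_algebraMap (algebraMap (ZMod p) K).injective p, hGH⟩
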